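/- arXiv:1403.3080 — 8 statements merged into one kernel-verified Lean document; each statement's English description precedes it below -/
import Mathlib

section
/- For all real a, b > 0, I(a,b) > 1/2 if and only if a > b. -/
/-- The Beta function `B(a,b) = ∫₀¹ t^(a-1) (1-t)^(b-1) dt`. -/
noncomputable def betaFn (a b : ℝ) : ℝ := ∫ t in (0:ℝ)..1, t ^ (a - 1) * (1 - t) ^ (b - 1)

/-- `I(a,b)`: the probability that a `Beta(a,b)` random variable is `≥ 1/2`. -/
noncomputable def I (a b : ℝ) : ℝ :=
  (1 / betaFn a b) * ∫ t in (1/2 : ℝ)..1, t ^ (a - 1) * (1 - t) ^ (b - 1)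

theorem beta_intble (a b : ℝ) (ha : 0 < a) (hb : 0 < b) :
    IntervalIntegrable (fun t : ℝ => t ^ (a - 1) * (1 - t) ^ (b - 1)) MeasureTheory.volume 0 1 := by
  have h := Complex.betaIntegral_convergent (u := a) (v := b) (by simpa) (by simpa)
  rw [intervalIntegrable_iff_integrableOn_Ioc_of_le zero_le_one] at h ⊢
  have h2 := h.re
  refine h2.congr ?_
  filter_upwards [MeasureTheory.ae_restrict_mem measurableSet_Ioc] with t ht
  have h1 : (0:ℝ) ≤ 1 - t := by linarith [ht.2]
  have e1 : ((t:ℂ) ^ ((a:ℂ) - 1)) = ((t ^ (a-1) : ℝ) : ℂ) := by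
    rw [Complex.ofReal_cpow ht.1.le]; push_cast; rfl
  have e2 : ((1 - (t:ℂ)) ^ ((b:ℂ) - 1)) = (((1 - t) ^ (b-1) : ℝ) : ℂ) := by
    rw [Complex.ofReal_cpow h1]; push_cast; rfl
  rw [e1, e2, ← Complex.ofReal_mul]
  simp

theorem beta_intble_half (a b : ℝ) (ha : 0 < a) (hb : 0 < b) :
    IntervalIntegrable (fun t : ℝ => t ^ (a - 1) * (1 - t) ^ (b - 1))
      MeasureTheory.volume (1/2) 1 := by
  refine (beta_intble a b ha hb).mono_set ?_
  rw [Set.uIcc_of_le (by norm_num), Set.uIcc_of_le (by norm_num)]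
  exact Set.Icc_subset_Icc (by norm_num) le_rfl

theorem upper_pos (a b : ℝ) (ha : 0 < a) (hb : 0 < b) :
    0 < ∫ t in (1/2 : ℝ)..1, t ^ (a - 1) * (1 - t) ^ (b - 1) := by
  refine intervalIntegral.intervalIntegral_pos_of_pos_on (beta_intble_half a b ha hb) ?_
    (by norm_num)
  intro t ht
  have h0 : (0:ℝ) < t := by linarith [ht.1]
  have h1 : (0:ℝ) < 1 - t := by linarith [ht.2]
  positivity

theorem upper_lt (a b : ℝ) (ha : 0 < a) (hb : 0 < b) (hab : b < a) :
    (∫ t in (1/2 : ℝ)..1, t ^ (b - 1) * (1 - t) ^ (a - 1)) <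
    ∫ t in (1/2 : ℝ)..1, t ^ (a - 1) * (1 - t) ^ (b - 1) := by
  rw [← sub_pos, ← intervalIntegral.integral_sub (beta_intble_half a b ha hb)
    (beta_intble_half b a hb ha)]
  refine intervalIntegral.intervalIntegral_pos_of_pos_on
    ((beta_intble_half a b ha hb).sub (beta_intble_half b a hb ha)) ?_ (by norm_num)
  intro t ht
  have h0 : (0:ℝ) < t := by linarith [ht.1]
  have h1 : (0:ℝ) < 1 - t := by linarith [ht.2]
  have e1 : t ^ (a - 1) = t ^ (b - 1) * t ^ (a - b) := by
    rw [← Real.rpow_add h0]; congr 1; ring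
  have e2 : (1 - t) ^ (a - 1) = (1 - t) ^ (b - 1) * (1 - t) ^ (a - b) := by
    rw [← Real.rpow_add h1]; congr 1; ring
  have h3 : (1 - t) ^ (a - b) < t ^ (a - b) :=
    Real.rpow_lt_rpow h1.le (by linarith [ht.1]) (by linarith)
  have h4 : 0 < t ^ (b - 1) * (1 - t) ^ (b - 1) := by positivity
  show 0 < t ^ (a - 1) * (1 - t) ^ (b - 1) - t ^ (b - 1) * (1 - t) ^ (a - 1)
  rw [e1, e2]
  nlinarith [mul_pos h4 (sub_pos.2 h3)]

theorem beta_split (a b : ℝ) (ha : 0 < a) (hb : 0 < b) :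
    betaFn a b = (∫ t in (1/2 : ℝ)..1, t ^ (b - 1) * (1 - t) ^ (a - 1)) +
      ∫ t in (1/2 : ℝ)..1, t ^ (a - 1) * (1 - t) ^ (b - 1) := by
  have h := intervalIntegral.integral_comp_sub_left (a := 1/2) (b := 1)
    (fun t : ℝ => t ^ (a - 1) * (1 - t) ^ (b - 1)) 1
  have e : (∫ t in (1/2 : ℝ)..1, t ^ (b - 1) * (1 - t) ^ (a - 1)) =
      ∫ t in (0 : ℝ)..(1/2), t ^ (a - 1) * (1 - t) ^ (b - 1) := by
    norm_num at h
    norm_num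
    rw [← h]
    congr 1; ext t; ring
  rw [e, betaFn, intervalIntegral.integral_add_adjacent_intervals _ (beta_intble_half a b ha hb)]
  refine (beta_intble a b ha hb).mono_set ?_
  rw [Set.uIcc_of_le (by norm_num), Set.uIcc_of_le (by norm_num)]
  exact Set.Icc_subset_Icc le_rfl (by norm_num)

theorem I_gt_half_iff (a b : ℝ) (ha : 0 < a) (hb : 0 < b) :
    1 / 2 < I a b ↔ b < a := by
  have p1 := upper_pos a b ha hb
  have p2 := upper_pos b a hb ha
  rw [I, beta_split a b ha hb, one_div_mul_eq_div, lt_div_iff₀ (by linarith)]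
  constructor
  · intro h
    by_contra hn
    rcases (not_lt.1 hn).lt_or_eq with h' | h'
    · linarith [upper_lt b a hb ha h']
    · subst h'
      linarith
  · intro h
    linarith [upper_lt a b ha hb h]
end

section
/- For all positive integers a and b with a ≠ b, R(a,b) = 0. -/
/-- `h(x) = max (x, 1-x)`. -/
noncomputable def hFn (x : ℝ) : ℝ := max x (1 - x)

/-- Expected stage-wise reward. -/
noncomputable def R (a b : ℝ) : ℝ :=
  a / (a + b) * (hFn (I (a + 1) b) - hFn (I a b)) +
    b / (a + b) * (hFn (I a (b + 1)) - hFn (I a b))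

/-- Optimistic knowledge-gradient reward. -/
noncomputable def Rplus (a b : ℝ) : ℝ :=
  max (hFn (I (a + 1) b) - hFn (I a b)) (hFn (I a (b + 1)) - hFn (I a b))

/-- Pessimistic knowledge-gradient reward. -/
noncomputable def Rminus (a b : ℝ) : ℝ :=
  min (hFn (I (a + 1) b) - hFn (I a b)) (hFn (I a (b + 1)) - hFn (I a b))

noncomputable def Jn (x : ℝ) (m n : ℕ) : ℝ := ∫ t in x..1, t ^ m * (1 - t) ^ n

lemma Jn_ii (m n : ℕ) (x y : ℝ) :
    IntervalIntegrable (fun t : ℝ => t ^ m * (1 - t) ^ n) MeasureTheory.volume x y :=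
  Continuous.intervalIntegrable (by fun_prop) _ _

lemma Jn_split (x : ℝ) (m n : ℕ) : Jn x (m+1) n + Jn x m (n+1) = Jn x m n := by
  unfold Jn
  rw [← intervalIntegral.integral_add (Jn_ii _ _ _ _) (Jn_ii _ _ _ _)]
  congr 1; ext t; ring

lemma Jn_parts (m n : ℕ) : ((m:ℝ)+1) * Jn 0 m (n+1) = (n+1) * Jn 0 (m+1) n := by
  have h : ∀ t ∈ Set.uIcc (0:ℝ) 1, HasDerivAt (fun t : ℝ => t^(m+1) * (1-t)^(n+1))
      (((m:ℝ)+1) * (t^m * (1-t)^(n+1)) - (n+1) * (t^(m+1) * (1-t)^n)) t := by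
    intro t _
    have h1 : HasDerivAt (fun t : ℝ => t^(m+1)) _ t := (hasDerivAt_id' t).fun_pow (m+1)
    have h2 : HasDerivAt (fun t : ℝ => (1-t)^(n+1)) _ t :=
      ((hasDerivAt_id' t).const_sub 1).fun_pow (n+1)
    refine (h1.fun_mul h2).congr_deriv ?_
    simp only [Nat.add_sub_cancel]
    push_cast
    ring
  have h3 := intervalIntegral.integral_eq_sub_of_hasDerivAt h
    (Continuous.intervalIntegrable (by fun_prop) _ _)
  rw [intervalIntegral.integral_sub ((Jn_ii _ _ _ _).const_mul _) ((Jn_ii _ _ _ _).const_mul _),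
    intervalIntegral.integral_const_mul, intervalIntegral.integral_const_mul] at h3
  simp at h3
  unfold Jn
  linarith

lemma Jn_symm (m n : ℕ) : Jn 0 m n = Jn (1/2) m n + Jn (1/2) n m := by
  have h : ∫ t in (0:ℝ)..(1/2), t ^ m * (1 - t) ^ n = Jn (1/2) n m := by
    unfold Jn
    have := intervalIntegral.integral_comp_sub_left (a := 0) (b := 1/2)
      (fun t : ℝ => t ^ n * (1 - t) ^ m) 1
    norm_num at this ⊢
    rw [← this]
    congr 1; ext t; ring
  rw [← h]
  unfold Jn
  rw [add_comm, intervalIntegral.integral_add_adjacent_intervals (Jn_ii _ _ _ _) (Jn_ii _ _ _ _)]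

lemma Jn_pos (m n : ℕ) : 0 < Jn 0 m n := by
  unfold Jn
  apply intervalIntegral.intervalIntegral_pos_of_pos_on (Jn_ii _ _ _ _) _ one_pos
  intro t ht
  have := ht.1
  have : 0 < 1 - t := by linarith [ht.2]
  positivity

lemma Jn_mono (m n : ℕ) (h : n ≤ m) : Jn (1/2) n m ≤ Jn (1/2) m n := by
  unfold Jn
  apply intervalIntegral.integral_mono_on (by norm_num) (Jn_ii _ _ _ _) (Jn_ii _ _ _ _)
  intro t ht
  obtain ⟨k, rfl⟩ := Nat.exists_eq_add_of_le h
  have h1 : 1/2 ≤ t := ht.1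
  have h2 : 0 ≤ 1 - t := by linarith [ht.2]
  have h3 : (1-t)^k ≤ t^k := pow_le_pow_left₀ h2 (by linarith) k
  have h0 : 0 ≤ t := by linarith
  have h4 : 0 ≤ t^n * (1-t)^n := by positivity
  calc _ = t^n * (1-t)^n * (1-t)^k := by ring
    _ ≤ t^n * (1-t)^n * t^k := mul_le_mul_of_nonneg_left h3 h4
    _ = _ := by ring

lemma I_eq (m n : ℕ) (a b : ℝ) (ha : a = m + 1) (hb : b = n + 1) :
    I a b = Jn (1/2) m n / Jn 0 m n := by
  subst ha hb
  unfold I betaFn Jn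
  simp only [add_sub_cancel_right, Real.rpow_natCast]
  ring

lemma I_ge (m n : ℕ) (h : n ≤ m) : 1/2 ≤ Jn (1/2) m n / Jn 0 m n := by
  rw [le_div_iff₀ (Jn_pos _ _), Jn_symm]
  linarith [Jn_mono m n h]

lemma I_le (m n : ℕ) (h : m ≤ n) : Jn (1/2) m n / Jn 0 m n ≤ 1/2 := by
  rw [div_le_iff₀ (Jn_pos _ _), Jn_symm]
  linarith [Jn_mono n m h]

lemma h_ge {x : ℝ} (h : 1/2 ≤ x) : hFn x = x := max_eq_left (by linarith)

lemma h_le {x : ℝ} (h : x ≤ 1/2) : hFn x = 1 - x := max_eq_right (by linarith)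

lemma mart (m n : ℕ) : ((m:ℝ)+1) * (Jn (1/2) (m+1) n / Jn 0 (m+1) n)
    + ((n:ℝ)+1) * (Jn (1/2) m (n+1) / Jn 0 m (n+1))
    = ((m:ℝ)+1+(n+1)) * (Jn (1/2) m n / Jn 0 m n) := by
  have s0 := Jn_split 0 m n
  have p := Jn_parts m n
  have hp := Jn_pos m n
  have hs : (0:ℝ) < (m:ℝ)+1+(n+1) := by positivity
  have e1 : Jn 0 (m+1) n = ((m:ℝ)+1) * Jn 0 m n / ((m:ℝ)+1+(n+1)) := by
    rw [eq_div_iff hs.ne', ← s0]; linarith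
  have e2 : Jn 0 m (n+1) = ((n:ℝ)+1) * Jn 0 m n / ((m:ℝ)+1+(n+1)) := by
    rw [eq_div_iff hs.ne', ← s0]; linarith
  rw [e1, e2, ← Jn_split (1/2) m n]
  have : (m:ℝ)+1 ≠ 0 := by positivity
  have : (n:ℝ)+1 ≠ 0 := by positivity
  field_simp

theorem R_eq_zero_of_ne (a b : ℕ) (ha : 0 < a) (hb : 0 < b) (hab : a ≠ b) :
    R a b = 0 := by
  obtain ⟨m, rfl⟩ := Nat.exists_eq_add_of_le' ha
  obtain ⟨n, rfl⟩ := Nat.exists_eq_add_of_le' hb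
  have M := mart m n
  have hs : (m:ℝ)+1+(n+1) ≠ 0 := by positivity
  unfold R
  rw [I_eq (m+1) n _ _ (by push_cast; ring) (by push_cast; ring),
    I_eq m n _ _ (by push_cast; ring) (by push_cast; ring),
    I_eq m (n+1) _ _ (by push_cast; ring) (by push_cast; ring)]
  push_cast
  rcases lt_or_gt_of_ne hab with h | h
  · rw [h_le (I_le (m+1) n (by omega)), h_le (I_le m (n+1) (by omega)), h_le (I_le m n (by omega))]
    rw [div_mul_eq_mul_div, div_mul_eq_mul_div, ← add_div, div_eq_zero_iff]
    left; linarith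
  · rw [h_ge (I_ge (m+1) n (by omega)), h_ge (I_ge m (n+1) (by omega)), h_ge (I_ge m n (by omega))]
    rw [div_mul_eq_mul_div, div_mul_eq_mul_div, ← add_div, div_eq_zero_iff]
    left; linarith
end

section
/- For every positive integer a, R(a,a) = (1/2)^{2a} / (a · B(a,a)), and in particular R(a,a) > 0. -/
theorem ftc_aux (n : ℕ) (x : ℝ) :
    (∫ t in x..1, t ^ n * (1 - t) ^ n) - 2 * (∫ t in x..1, t ^ (n+1) * (1 - t) ^ n)
      = - (x * (1 - x)) ^ (n+1) / (n+1) := by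
  have h0 : (n + 1 : ℝ) ≠ 0 := by positivity
  have h : (∫ t in x..1, (t ^ n * (1 - t) ^ n - 2 * (t ^ (n+1) * (1 - t) ^ n)))
      = (1 * (1 - 1 : ℝ)) ^ (n+1) / (n+1) - (x * (1 - x)) ^ (n+1) / (n+1) := by
    apply intervalIntegral.integral_eq_sub_of_hasDerivAt
      (f := fun t : ℝ => (t * (1 - t)) ^ (n+1) / (n+1))
    · intro t _
      have h1 : HasDerivAt (fun t : ℝ => t * (1 - t)) (1 * (1 - t) + t * (0 - 1)) t :=
        (hasDerivAt_id' t).mul ((hasDerivAt_const t (1:ℝ)).sub (hasDerivAt_id' t))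
      have h2 := (h1.pow (n+1)).div_const (n+1 : ℝ)
      refine h2.congr_deriv ?_
      simp only [Nat.add_sub_cancel, Nat.cast_add, Nat.cast_one]
      field_simp
      rw [mul_pow]
      ring
    · exact (by fun_prop : Continuous _).intervalIntegrable _ _
  rw [intervalIntegral.integral_sub ((by fun_prop : Continuous _).intervalIntegrable _ _)
    ((by fun_prop : Continuous _).intervalIntegrable _ _),
    intervalIntegral.integral_const_mul] at h
  rw [h]
  simp
  ring

theorem split_aux (n : ℕ) (x : ℝ) :
    (∫ t in x..1, t ^ n * (1 - t) ^ (n+1)) =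
      (∫ t in x..1, t ^ n * (1 - t) ^ n) - (∫ t in x..1, t ^ (n+1) * (1 - t) ^ n) := by
  rw [← intervalIntegral.integral_sub ((by fun_prop : Continuous _).intervalIntegrable _ _)
    ((by fun_prop : Continuous _).intervalIntegrable _ _)]
  congr 1
  funext t
  ring

theorem half_aux (n : ℕ) :
    (∫ t in (0:ℝ)..1, t ^ n * (1 - t) ^ n) = 2 * ∫ t in (1/2:ℝ)..1, t ^ n * (1 - t) ^ n := by
  have h := intervalIntegral.integral_comp_sub_left (a := (0:ℝ)) (b := 1/2)
    (fun t : ℝ => t ^ n * (1 - t) ^ n) 1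
  have h2 : (∫ t in (0:ℝ)..(1/2), t ^ n * (1 - t) ^ n) = ∫ t in (1/2:ℝ)..1, t ^ n * (1 - t) ^ n := by
    rw [show (1:ℝ) - 1/2 = 1/2 by norm_num, sub_zero] at h
    rw [← h]
    congr 1
    funext t
    simp only [sub_sub_cancel]
    ring
  rw [← intervalIntegral.integral_add_adjacent_intervals (b := (1/2:ℝ))
    ((by fun_prop : Continuous _).intervalIntegrable _ _)
    ((by fun_prop : Continuous _).intervalIntegrable _ _), h2]
  ring

theorem pos_aux (n : ℕ) : 0 < ∫ t in (0:ℝ)..1, t ^ n * (1 - t) ^ n := by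
  apply intervalIntegral.intervalIntegral_pos_of_pos_on
  · exact (by fun_prop : Continuous _).intervalIntegrable _ _
  · intro t ht
    have := ht.1
    have : 0 < 1 - t := by linarith [ht.2]
    positivity
  · norm_num

theorem R_diag (a : ℕ) (ha : 0 < a) :
    R a a = (1 / 2 : ℝ) ^ (2 * a) / (a * betaFn a a) ∧ 0 < R a a := by
  obtain ⟨n, rfl⟩ : ∃ n, a = n + 1 := ⟨a - 1, by omega⟩
  have e1 : ((n + 1 : ℕ) : ℝ) - 1 = (n : ℕ) := by push_cast; ring
  have e2 : ((n + 1 : ℕ) : ℝ) + 1 - 1 = ((n + 1 : ℕ) : ℝ) := by ring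
  have h0 := ftc_aux n 0
  have h1 := ftc_aux n (1/2)
  have s0 := split_aux n 0
  have s1 := split_aux n (1/2)
  have hh := half_aux n
  have hB := pos_aux n
  have hR : R ((n + 1 : ℕ) : ℝ) ((n + 1 : ℕ) : ℝ) =
      (1 / 2 : ℝ) ^ (2 * (n+1)) / (((n+1 : ℕ) : ℝ) * betaFn ((n + 1 : ℕ) : ℝ) ((n + 1 : ℕ) : ℝ)) := by
    unfold R I betaFn
    simp only [e2, e1, Real.rpow_natCast]
    rw [s0, s1]
    set B := ∫ t in (0:ℝ)..1, t ^ n * (1 - t) ^ n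
    set J := ∫ t in (1/2:ℝ)..1, t ^ n * (1 - t) ^ n
    set K := ∫ t in (0:ℝ)..1, t ^ (n+1) * (1 - t) ^ n
    set L := ∫ t in (1/2:ℝ)..1, t ^ (n+1) * (1 - t) ^ n
    have hK : K = B / 2 := by
      simp at h0
      linarith
    have hJ : J = B / 2 := by linarith
    have hn : (0:ℝ) < n + 1 := by positivity
    obtain ⟨q, hq⟩ : ∃ q : ℝ, q = (1/2:ℝ) ^ (2 * (n+1)) := ⟨_, rfl⟩
    have hq0 : 0 < q := by rw [hq]; positivity
    have hq' : ((1/2:ℝ) * (1 - 1/2)) ^ (n+1) = q := by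
      rw [hq, pow_mul]; norm_num
    rw [hq', hJ] at h1
    have hL : L = B / 4 + q / (2 * (n+1)) := by
      have : q / (2 * ((n:ℝ)+1)) = q / (n+1) / 2 := by field_simp
      rw [neg_div] at h1
      linarith
    rw [← hq, hK, hJ, hL]
    push_cast
    obtain ⟨c, hc⟩ : ∃ c : ℝ, c = q / ((n+1) * B) := ⟨_, rfl⟩
    have hc0 : 0 < c := by rw [hc]; positivity
    have i0 : 1 / B * (B / 2) = 1/2 := by field_simp
    have i1 : 1 / (B / 2) * (B / 4 + q / (2 * ((n:ℝ)+1))) = 1/2 + c := by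
      rw [hc]; field_simp; ring
    have i2 : 1 / (B - B / 2) * (B / 2 - (B / 4 + q / (2 * ((n:ℝ)+1)))) = 1/2 - c := by
      rw [hc, show B - B / 2 = B / 2 by ring]; field_simp; ring
    rw [i0, i1, i2, ← hc]
    unfold hFn
    rw [max_eq_left (by linarith), max_eq_left (by linarith), max_eq_right (by linarith)]
    field_simp
    ring
  refine ⟨hR, ?_⟩
  rw [hR]
  have : 0 < betaFn ((n + 1 : ℕ) : ℝ) ((n + 1 : ℕ) : ℝ) := by
    unfold betaFn
    simp only [e1, Real.rpow_natCast]
    exact hB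
  positivity
end

section
/- For every integer a ≥ 2, R⁺(a,a) = ((2a−1)/(2a)) · R⁺(a−1, a−1), and the sequence a ↦ R⁺(a,a) = (1/2)^{2a} / (a · B(a,a)) tends to 0 as the positive integer a tends to infinity. -/
theorem aux_fun (n k : ℕ) (x y : ℝ) (hx : x = n + 1) (hy : y = k + 1) :
    (fun t : ℝ => t ^ (x - 1) * (1 - t) ^ (y - 1)) = fun t : ℝ => t ^ n * (1 - t) ^ k := by
  funext t
  rw [hx, hy, add_sub_cancel_right, add_sub_cancel_right, Real.rpow_natCast, Real.rpow_natCast]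

noncomputable def bN (n : ℕ) : ℝ := ∫ t in (0:ℝ)..1, t ^ n * (1 - t) ^ n

theorem bN_pos (n : ℕ) : 0 < bN n := by
  unfold bN
  apply intervalIntegral.intervalIntegral_pos_of_pos_on
  · exact Continuous.intervalIntegrable (by fun_prop) _ _
  · intro t ht
    have h1 := ht.1
    have h2 : 0 < 1 - t := by linarith [ht.2]
    positivity
  · norm_num

theorem refl_int (n k : ℕ) : (∫ t in (0:ℝ)..1, t ^ n * (1 - t) ^ k)
    = ∫ t in (0:ℝ)..1, t ^ k * (1 - t) ^ n := by
  have := intervalIntegral.integral_comp_sub_left (a := 0) (b := 1)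
    (fun t : ℝ => t ^ k * (1 - t) ^ n) 1
  simp only [sub_sub_cancel, sub_zero, sub_self] at this
  rw [← this]
  congr 1
  funext t
  ring

theorem split_int (n : ℕ) (x : ℝ) : (∫ t in x..1, t ^ (n+1) * (1 - t) ^ n)
    + (∫ t in x..1, t ^ n * (1 - t) ^ (n+1)) = ∫ t in x..1, t ^ n * (1 - t) ^ n := by
  rw [← intervalIntegral.integral_add]
  · congr 1
    funext t
    ring
  · exact Continuous.intervalIntegrable (by fun_prop) _ _
  · exact Continuous.intervalIntegrable (by fun_prop) _ _

theorem half_int (n : ℕ) : (∫ t in (1/2:ℝ)..1, t ^ n * (1 - t) ^ n) = bN n / 2 := by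
  have := intervalIntegral.integral_comp_sub_left (a := 1/2) (b := 1)
    (fun t : ℝ => t ^ n * (1 - t) ^ n) 1
  simp only [sub_sub_cancel, sub_self] at this
  have h3 : (∫ t in (1/2:ℝ)..1, t ^ n * (1 - t) ^ n)
      = ∫ t in (0:ℝ)..(1/2), t ^ n * (1 - t) ^ n := by
    rw [show (1:ℝ) - 1/2 = 1/2 by norm_num] at this
    rw [← this]
    congr 1
    funext t
    ring
  have h4 : (∫ t in (0:ℝ)..(1/2), t ^ n * (1 - t) ^ n)
     + (∫ t in (1/2:ℝ)..1, t ^ n * (1 - t) ^ n) = bN n := by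
    apply intervalIntegral.integral_add_adjacent_intervals <;>
    exact Continuous.intervalIntegrable (by fun_prop) _ _
  linarith

theorem upper_int (n : ℕ) : (∫ t in (1/2:ℝ)..1, t ^ (n+1) * (1 - t) ^ n)
    = bN n / 4 + (1/4)^(n+1) / (2 * (n+1)) := by
  have h : (∫ t in (1/2:ℝ)..1, (t ^ (n+1) * (1 - t) ^ n - (1/2) * (t ^ n * (1 - t) ^ n)))
      = (-(1 * (1 - 1)) ^ (n+1) / (2 * (n+1)) : ℝ)
        - (-((1/2) * (1 - 1/2)) ^ (n+1) / (2 * (n+1)) : ℝ) := by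
    apply intervalIntegral.integral_eq_sub_of_hasDerivAt
      (f := fun t : ℝ => -(t * (1 - t)) ^ (n+1) / (2 * (n+1)))
    · intro t _
      have h1 : HasDerivAt (fun t : ℝ => t * (1 - t)) (1 * (1 - t) + t * (-1)) t :=
        (hasDerivAt_id' t).mul ((hasDerivAt_id' t).const_sub 1)
      have h2 := ((h1.pow (n+1)).neg).div_const (2 * ((n:ℝ)+1))
      refine HasDerivAt.congr_deriv h2 ?_
      have : (n:ℝ) + 1 ≠ 0 := by positivity
      simp [mul_pow]
      push_cast
      field_simp
      ring
    · exact Continuous.intervalIntegrable (by fun_prop) _ _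
  rw [intervalIntegral.integral_sub (Continuous.intervalIntegrable (by fun_prop) _ _)
    (Continuous.intervalIntegrable (by fun_prop) _ _),
    intervalIntegral.integral_const_mul, half_int] at h
  rw [show ((1/2:ℝ) * (1 - 1/2)) = 1/4 by norm_num] at h
  simp only [sub_self, mul_zero, ne_eq, Nat.add_eq_zero_iff, one_ne_zero, and_false,
    not_false_eq_true, zero_pow, neg_zero, zero_div, zero_sub, neg_div, neg_neg] at h
  linarith

theorem bN_succ (n : ℕ) : (4 * n + 6) * bN (n+1) = (n+1) * bN n := by
  have h : (∫ t in (0:ℝ)..1, ((n+1) * (t ^ n * (1 - t) ^ n)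
      - (4*n+6) * (t ^ (n+1) * (1 - t) ^ (n+1))))
      = ((1 * (1 - 1)) ^ (n+1) * (1 - 2 * 1) : ℝ) - ((0 * (1 - 0)) ^ (n+1) * (1 - 2 * 0) : ℝ) := by
    apply intervalIntegral.integral_eq_sub_of_hasDerivAt
      (f := fun t : ℝ => (t * (1 - t)) ^ (n+1) * (1 - 2 * t))
    · intro t _
      have h1 : HasDerivAt (fun t : ℝ => t * (1 - t)) (1 * (1 - t) + t * (-1)) t :=
        (hasDerivAt_id' t).mul ((hasDerivAt_id' t).const_sub 1)
      have h2 := (h1.pow (n+1)).mul (((hasDerivAt_id' t).const_mul 2).const_sub 1)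
      refine HasDerivAt.congr_deriv h2 ?_
      simp [mul_pow]
      push_cast
      ring
    · exact Continuous.intervalIntegrable (by fun_prop) _ _
  rw [intervalIntegral.integral_sub (Continuous.intervalIntegrable (by fun_prop) _ _)
    (Continuous.intervalIntegrable (by fun_prop) _ _),
    intervalIntegral.integral_const_mul, intervalIntegral.integral_const_mul] at h
  simp only [sub_self, mul_zero, zero_mul, ne_eq, Nat.add_eq_zero_iff, one_ne_zero, and_false,
    not_false_eq_true, zero_pow] at h
  unfold bN
  linarith

theorem Rplus_eq (n : ℕ) : Rplus ((n:ℝ)+1) ((n:ℝ)+1) = (1/4)^(n+1) / ((n+1) * bN n) := by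
  have hb := bN_pos n
  have hn : (0:ℝ) < n + 1 := by positivity
  have hB : (∫ t in (0:ℝ)..1, t ^ (n+1) * (1 - t) ^ n) = bN n / 2 := by
    have h1 := split_int n 0
    have h2 := refl_int n (n+1)
    unfold bN
    linarith
  have hB' : (∫ t in (0:ℝ)..1, t ^ n * (1 - t) ^ (n+1)) = bN n / 2 := by
    rw [refl_int, hB]
  have hU' : (∫ t in (1/2:ℝ)..1, t ^ n * (1 - t) ^ (n+1))
      = bN n / 4 - (1/4)^(n+1) / (2 * (n+1)) := by
    have h1 := split_int n (1/2)
    rw [upper_int, half_int] at h1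
    linarith
  have i1 : I ((n:ℝ)+1) ((n:ℝ)+1) = 1/2 := by
    unfold I betaFn
    rw [aux_fun n n _ _ rfl rfl, half_int]
    change 1 / bN n * _ = _
    field_simp
  have i2 : I ((n:ℝ)+1+1) ((n:ℝ)+1) = 1/2 + (1/4)^(n+1) / ((n+1) * bN n) := by
    unfold I betaFn
    rw [aux_fun (n+1) n _ _ (by push_cast; rfl) rfl, upper_int, hB]
    field_simp
    ring
  have i3 : I ((n:ℝ)+1) ((n:ℝ)+1+1) = 1/2 - (1/4)^(n+1) / ((n+1) * bN n) := by
    unfold I betaFn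
    rw [aux_fun n (n+1) _ _ rfl (by push_cast; rfl), hU', hB']
    field_simp
    ring
  have hp : 0 < (1/4:ℝ)^(n+1) / ((n+1) * bN n) := by positivity
  unfold Rplus hFn
  rw [i1, i2, i3]
  generalize (1/4:ℝ)^(n+1) / ((n+1) * bN n) = r at *
  rw [max_eq_left (a := 1/2 + r) (by linarith), max_eq_right (a := 1/2 - r) (by linarith),
    max_eq_left (a := (1/2:ℝ)) (by norm_num), max_eq_left (by linarith)]
  ring

noncomputable def rN (n : ℕ) : ℝ := (1/4)^(n+1) / ((n+1) * bN n)

theorem rN_succ (n : ℕ) : rN (n+1) = (2 * n + 3) / (2 * n + 4) * rN n := by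
  have hb := bN_pos n
  have hb' := bN_pos (n+1)
  have hn : (0:ℝ) < n + 1 := by positivity
  have h := bN_succ n
  have h' : bN n = (4 * n + 6) * bN (n+1) / (n+1) := by field_simp; linarith
  unfold rN
  rw [h']
  push_cast
  rw [pow_succ _ (n+1)]
  field_simp
  ring

theorem rN_sq (n : ℕ) : rN n ^ 2 * (2 * n + 3) ≤ rN 0 ^ 2 * 3 := by
  induction n with
  | zero => simp
  | succ n ih =>
    refine le_trans ?_ ih
    rw [rN_succ, mul_pow, mul_comm _ (rN n ^ 2), mul_assoc]
    apply mul_le_mul_of_nonneg_left _ (sq_nonneg _)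
    push_cast
    have hn : (0:ℝ) ≤ n := by positivity
    rw [div_pow, div_mul_eq_mul_div, div_le_iff₀ (by positivity)]
    nlinarith

theorem rN_tendsto : Filter.Tendsto rN Filter.atTop (nhds 0) := by
  have h : Filter.Tendsto (fun n => rN n ^ 2) Filter.atTop (nhds 0) := by
    have h1 : Filter.Tendsto (fun n : ℕ => (rN 0 ^ 2 * 3) / ((n:ℝ) + 1)) Filter.atTop (nhds 0) :=
      tendsto_const_div_atTop_nhds_zero_nat (rN 0 ^ 2 * 3) |>.comp (Filter.tendsto_add_atTop_nat 1)
        |>.congr (fun n => by simp)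
    refine squeeze_zero (fun n => sq_nonneg _) (fun n => ?_) h1
    rw [le_div_iff₀ (by positivity)]
    refine le_trans ?_ (rN_sq n)
    apply mul_le_mul_of_nonneg_left _ (sq_nonneg _)
    have hn : (0:ℝ) ≤ n := by positivity
    linarith
  have h2 := h.sqrt
  simp only [Real.sqrt_sq_eq_abs, Real.sqrt_zero] at h2
  exact (tendsto_zero_iff_abs_tendsto_zero _).2 h2

theorem Rplus_diag_ratio_and_tendsto_zero :
    (∀ a : ℕ, 2 ≤ a →
      Rplus a a = ((2 * (a : ℝ) - 1) / (2 * (a : ℝ))) * Rplus ((a : ℝ) - 1) ((a : ℝ) - 1)) ∧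
    Filter.Tendsto (fun a : ℕ => Rplus a a) Filter.atTop (nhds 0) := by
  constructor
  · intro a ha
    obtain ⟨n, rfl⟩ : ∃ n, a = n + 2 := ⟨a - 2, by omega⟩
    have h1 : Rplus ((n + 2 : ℕ) : ℝ) ((n + 2 : ℕ) : ℝ) = rN (n+1) := by
      have := Rplus_eq (n+1)
      rw [show (((n+1 : ℕ):ℝ) + 1) = ((n + 2 : ℕ) : ℝ) by push_cast; ring] at this
      rw [this, rN]
      push_cast
      ring_nf
    have h2 : Rplus (((n + 2 : ℕ) : ℝ) - 1) (((n + 2 : ℕ) : ℝ) - 1) = rN n := by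
      rw [show (((n + 2 : ℕ) : ℝ) - 1) = (n:ℝ) + 1 by push_cast; ring, Rplus_eq, rN]
    rw [h1, h2, rN_succ]
    push_cast
    ring_nf
  · rw [← Filter.tendsto_add_atTop_iff_nat 1]
    refine rN_tendsto.congr (fun n => ?_)
    push_cast
    rw [Rplus_eq, rN]
end

section
/- For every positive integer a and every integer k with 0 ≤ k ≤ a−2, R⁺(a+k+1, a−k−1) < R⁺(a+k, a−k); that is, for fixed a the quantity R⁺(a+k, a−k) is strictly decreasing in k for k = 0, 1, …, a−1. -/
noncomputable def auxF (x : ℝ) (p q : ℕ) : ℝ := ∫ t in x..1, t ^ p * (1 - t) ^ q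

lemma auxF_int (x y : ℝ) (p q : ℕ) :
    IntervalIntegrable (fun t : ℝ => t ^ p * (1 - t) ^ q) MeasureTheory.volume x y :=
  Continuous.intervalIntegrable (by fun_prop) _ _

lemma auxF_add (x : ℝ) (p q : ℕ) : auxF x p (q + 1) + auxF x (p + 1) q = auxF x p q := by
  unfold auxF
  rw [← intervalIntegral.integral_add (auxF_int _ _ _ _) (auxF_int _ _ _ _)]
  congr 1
  funext t
  ring

lemma auxF_ibp (x : ℝ) (p q : ℕ) :
    (p + 1) * auxF x p (q + 1) - (q + 1) * auxF x (p + 1) q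
      = - (x ^ (p + 1) * (1 - x) ^ (q + 1)) := by
  unfold auxF
  rw [← intervalIntegral.integral_const_mul, ← intervalIntegral.integral_const_mul,
    ← intervalIntegral.integral_sub ((auxF_int _ _ _ _).const_mul _)
      ((auxF_int _ _ _ _).const_mul _)]
  rw [intervalIntegral.integral_eq_sub_of_hasDerivAt
    (f := fun t : ℝ => t ^ (p + 1) * (1 - t) ^ (q + 1))]
  · simp
  · intro t _
    have h1 := (hasDerivAt_pow (p + 1) t)
    have h2 := ((hasDerivAt_id t).const_sub 1).pow (q + 1)
    have h3 := h1.mul h2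
    refine HasDerivAt.congr_deriv (f := fun t : ℝ => t ^ (p + 1) * (1 - t) ^ (q + 1)) h3 ?_
    push_cast
    simp only [id, add_tsub_cancel_right, Pi.pow_apply]
    ring
  · exact ((auxF_int _ _ _ _).const_mul _).sub ((auxF_int _ _ _ _).const_mul _)

lemma auxB_pos (p q : ℕ) : 0 < auxF 0 p q := by
  unfold auxF
  apply intervalIntegral.intervalIntegral_pos_of_pos_on (auxF_int _ _ _ _) _ one_pos
  intro t ht
  have h1 := ht.1
  have h2 : 0 < 1 - t := by linarith [ht.2]
  positivity

lemma auxF_half_symm (p : ℕ) : 2 * auxF (1/2) p p = auxF 0 p p := by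
  unfold auxF
  rw [← intervalIntegral.integral_add_adjacent_intervals (auxF_int 0 (1/2) p p)
    (auxF_int (1/2) 1 p p)]
  have h := intervalIntegral.integral_comp_sub_left
    (fun t : ℝ => t ^ p * (1 - t) ^ p) (a := 0) (b := 1/2) 1
  have e : (∫ t in (0:ℝ)..(1/2), (fun t : ℝ => t ^ p * (1 - t) ^ p) (1 - t))
      = ∫ t in (0:ℝ)..(1/2), t ^ p * (1 - t) ^ p := by
    congr 1
    funext t
    simp only [sub_sub_cancel]
    ring
  rw [e] at h
  norm_num at h ⊢
  rw [h]
  ring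

noncomputable def auxI (p q : ℕ) : ℝ := auxF (1/2) p q / auxF 0 p q
noncomputable def auxC (p q : ℕ) : ℝ := (1/2) ^ (p + q + 2) / auxF 0 p q

lemma auxC_pos (p q : ℕ) : 0 < auxC p q := div_pos (by positivity) (auxB_pos p q)

lemma auxI_left (p q : ℕ) : auxI (p + 1) q = auxI p q + auxC p q / (p + 1) := by
  have a1 := auxF_add (1/2) p q
  have a2 := auxF_ibp (1/2) p q
  have b1 := auxF_add 0 p q
  have b2 := auxF_ibp 0 p q
  have hB := auxB_pos p q
  have c : ((1:ℝ)/2) ^ (p + 1) * (1 - 1/2) ^ (q + 1) = (1/2) ^ (p + q + 2) := by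
    norm_num; ring
  rw [c] at a2
  simp at b2
  have hA : auxF (1/2) (p+1) q = ((p + 1) * auxF (1/2) p q + (1/2) ^ (p + q + 2)) / (p + q + 2) := by
    rw [eq_div_iff (by positivity), ← a1]; linarith
  have hB2 : auxF 0 (p+1) q = ((p + 1) * auxF 0 p q) / (p + q + 2) := by
    rw [eq_div_iff (by positivity), ← b1]; linarith
  unfold auxI auxC
  rw [hA, hB2]
  field_simp

lemma auxI_right (p q : ℕ) : auxI p (q + 1) = auxI p q - auxC p q / (q + 1) := by
  have a1 := auxF_add (1/2) p q
  have a2 := auxF_ibp (1/2) p q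
  have b1 := auxF_add 0 p q
  have b2 := auxF_ibp 0 p q
  have hB := auxB_pos p q
  have c : ((1:ℝ)/2) ^ (p + 1) * (1 - 1/2) ^ (q + 1) = (1/2) ^ (p + q + 2) := by
    norm_num; ring
  rw [c] at a2
  simp at b2
  have hA : auxF (1/2) p (q+1) = ((q + 1) * auxF (1/2) p q - (1/2) ^ (p + q + 2)) / (p + q + 2) := by
    rw [eq_div_iff (by positivity), ← a1]; linarith
  have hB2 : auxF 0 p (q+1) = ((q + 1) * auxF 0 p q) / (p + q + 2) := by
    rw [eq_div_iff (by positivity), ← b1]; linarith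
  unfold auxI auxC
  rw [hA, hB2]
  field_simp

lemma auxI_diag (p : ℕ) : auxI p p = 1/2 := by
  have := auxF_half_symm p
  have hB := auxB_pos p p
  unfold auxI
  rw [div_eq_div_iff hB.ne' two_ne_zero]
  linarith

lemma auxI_ge (q d : ℕ) : 1/2 ≤ auxI (q + d) q := by
  induction d with
  | zero => exact (auxI_diag q).ge
  | succ d ih =>
    rw [← add_assoc, auxI_left]
    have := auxC_pos (q + d) q
    have : 0 < auxC (q + d) q / (((q + d : ℕ) : ℝ) + 1) := by positivity
    linarith

lemma I_eq_auxI (p q : ℕ) : I ((p : ℝ) + 1) ((q : ℝ) + 1) = auxI p q := by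
  unfold I betaFn auxI auxF
  simp only [add_sub_cancel_right, Real.rpow_natCast]
  ring

lemma Rplus_eq_s12 (p q : ℕ) (h : q ≤ p) :
    Rplus ((p : ℝ) + 1) ((q : ℝ) + 1) = auxC p q / (p + 1) := by
  have e1 := I_eq_auxI (p + 1) q
  have e2 := I_eq_auxI p (q + 1)
  push_cast at e1 e2
  unfold Rplus
  rw [e1, e2, I_eq_auxI]
  have hl := auxI_left p q
  have hr := auxI_right p q
  have hC := auxC_pos p q
  have hp : 0 < auxC p q / ((p:ℝ) + 1) := by positivity
  have hq : 0 < auxC p q / ((q:ℝ) + 1) := by positivity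
  have h0 : 1/2 ≤ auxI p q := by
    obtain ⟨d, rfl⟩ := Nat.exists_eq_add_of_le h
    exact auxI_ge q d
  have f1 : hFn (auxI p q) = auxI p q := max_eq_left (by linarith)
  have f2 : hFn (auxI (p+1) q) = auxI (p+1) q := max_eq_left (by linarith)
  rw [f1, f2, max_eq_left]
  · linarith
  · have : hFn (auxI p (q+1)) ≤ auxI (p+1) q := by
      apply max_le
      · linarith
      · rcases h.eq_or_lt with rfl | h
        · have := auxI_diag q
          linarith
        · obtain ⟨d, rfl⟩ := Nat.exists_eq_add_of_le (Nat.succ_le_of_lt h)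
          have := auxI_ge (q+1) d
          have e : q.succ + d = q + 1 + d := rfl
          rw [e] at *
          linarith
    linarith

theorem Rplus_antidiag_strict_anti (a k : ℕ) (ha : 0 < a) (hk : k + 2 ≤ a) :
    Rplus ((a : ℝ) + k + 1) ((a : ℝ) - k - 1) < Rplus ((a : ℝ) + k) ((a : ℝ) - k) := by
  obtain ⟨r, rfl⟩ := Nat.exists_eq_add_of_le hk
  have e1 := Rplus_eq_s12 (2 * k + r + 2) r (by omega)
  have e2 := Rplus_eq_s12 (2 * k + r + 1) (r + 1) (by omega)
  have b2 := auxF_ibp 0 (2 * k + r + 1) r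
  have hB := auxB_pos (2 * k + r + 1) (r + 1)
  have hB' := auxB_pos (2 * k + r + 2) r
  push_cast at *
  simp at b2
  have g1 : (k:ℝ) + 2 + r + k + 1 = 2 * k + r + 2 + 1 := by ring
  have g2 : (k:ℝ) + 2 + r - k - 1 = r + 1 := by ring
  have g3 : (k:ℝ) + 2 + r + k = 2 * k + r + 1 + 1 := by ring
  have g4 : (k:ℝ) + 2 + r - k = r + 1 + 1 := by ring
  rw [g1, g2, g3, g4, e1, e2]
  unfold auxC
  have e : 2 * k + r + 1 + (r + 1) + 2 = 2 * k + r + 2 + r + 2 := by ring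
  rw [e, div_div, div_div]
  apply div_lt_div_of_pos_left (by positivity) (by positivity)
  have hk0 : (0:ℝ) ≤ k := Nat.cast_nonneg k
  have : auxF 0 (2 * k + r + 1) (r + 1) * (2 * (k:ℝ) + r + 1 + 1)
      = (r + 1) * auxF 0 (2 * k + r + 2) r := by
    have e : 2 * k + r + 1 + 1 = 2 * k + r + 2 := by ring
    rw [e] at b2
    linarith
  rw [this]
  nlinarith
end

section
/- For all positive integers a and b with a ≥ b, R⁺(a+1, b) < R⁺(a, b); that is, for fixed b, R⁺(a,b) is strictly decreasing in a on the range a ≥ b. -/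
noncomputable def bJ (x : ℝ) (m n : ℕ) : ℝ := ∫ t in x..1, t ^ m * (1 - t) ^ n

lemma bJ_int (x : ℝ) (m n : ℕ) :
    IntervalIntegrable (fun t : ℝ => t ^ m * (1 - t) ^ n) MeasureTheory.volume x 1 :=
  Continuous.intervalIntegrable (by fun_prop) _ _

lemma I_eq_s13 (m n : ℕ) (x y : ℝ) (hx : x = m + 1) (hy : y = n + 1) :
    I x y = bJ (1/2) m n / bJ 0 m n := by
  subst hx hy
  simp only [I, betaFn, bJ, add_sub_cancel_right, Real.rpow_natCast]
  ring

lemma bJ_add (x : ℝ) (m n : ℕ) : bJ x m n = bJ x (m+1) n + bJ x m (n+1) := by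
  unfold bJ
  rw [← intervalIntegral.integral_add (bJ_int x _ _) (bJ_int x _ _)]
  congr 1; ext t; ring

lemma bJ_parts (x : ℝ) (m n : ℕ) :
    (m+1) * bJ x m (n+1) - (n+1) * bJ x (m+1) n = - (x^(m+1) * (1-x)^(n+1)) := by
  unfold bJ
  rw [← intervalIntegral.integral_const_mul, ← intervalIntegral.integral_const_mul,
    ← intervalIntegral.integral_sub ((bJ_int x _ _).const_mul _) ((bJ_int x _ _).const_mul _)]
  rw [intervalIntegral.integral_eq_sub_of_hasDerivAt (f := fun t : ℝ => t^(m+1) * (1-t)^(n+1))]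
  · simp
  · intro t _
    have h1 : HasDerivAt (fun t : ℝ => t^(m+1)) _ t := hasDerivAt_pow (m+1) t
    have h2 : HasDerivAt (fun t : ℝ => (1-t)^(n+1)) _ t :=
      ((hasDerivAt_id t).const_sub 1).fun_pow (n+1)
    refine (h1.fun_mul h2).congr_deriv ?_
    simp only [Nat.add_sub_cancel, id]
    push_cast
    ring
  · exact Continuous.intervalIntegrable (by fun_prop) _ _

lemma bK_pos (m n : ℕ) : 0 < bJ 0 m n := by
  apply intervalIntegral.intervalIntegral_pos_of_pos_on (bJ_int 0 m n) _ one_pos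
  rintro t ⟨h0, h1⟩
  have : 0 < 1 - t := by linarith
  positivity

lemma bJ_symm (m : ℕ) : bJ (1/2) m m / bJ 0 m m = 1/2 := by
  have h : bJ 0 m m = 2 * bJ (1/2) m m := by
    have h1 := intervalIntegral.integral_comp_sub_left (a := 1/2) (b := 1)
      (fun t : ℝ => t^m * (1-t)^m) 1
    have h2 := intervalIntegral.integral_add_adjacent_intervals (a := 0) (b := 1/2) (c := 1)
      (f := fun t : ℝ => t^m * (1-t)^m) (μ := MeasureTheory.volume)
      (Continuous.intervalIntegrable (by fun_prop) _ _) (bJ_int _ _ _)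
    have h3 : ∫ t in (1/2:ℝ)..1, (1-t)^m * (1-(1-t))^m = bJ (1/2) m m := by
      unfold bJ; congr 1; ext t; ring
    rw [h3] at h1
    norm_num at h1 h2
    unfold bJ at *
    norm_num
    linarith
  have := bK_pos m m
  rw [div_eq_iff this.ne']; linarith

noncomputable def dd (m n : ℕ) : ℝ := (1/2)^(m+n+2) / ((m+1) * bJ 0 m n)

lemma dd_pos (m n : ℕ) : 0 < dd m n := by
  have := bK_pos m n
  unfold dd; positivity

lemma step_left (m n : ℕ) :
    bJ (1/2) (m+1) n / bJ 0 (m+1) n = bJ (1/2) m n / bJ 0 m n + dd m n := by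
  have k := bK_pos m n
  have k1 := bK_pos (m+1) n
  have e1 := bJ_add 0 m n
  have e2 := bJ_parts 0 m n
  have e3 := bJ_add (1/2) m n
  have e4 := bJ_parts (1/2) m n
  have hp : (1/2:ℝ)^(m+1) * (1-1/2)^(n+1) = (1/2)^(m+n+2) := by
    norm_num; ring
  rw [hp] at e4
  have hk : bJ 0 (m+1) n = (m+1) * bJ 0 m n / (m+n+2) := by
    rw [eq_div_iff (by positivity)]; simp at e2; rw [e1]; linarith
  have hj : bJ (1/2) (m+1) n = ((m+1) * bJ (1/2) m n + (1/2)^(m+n+2)) / (m+n+2) := by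
    rw [eq_div_iff (by positivity), e3]; linarith
  rw [hk, hj, dd]
  have : (m:ℝ)+n+2 ≠ 0 := by positivity
  have : (m:ℝ)+1 ≠ 0 := by positivity
  field_simp

lemma step_right (m n : ℕ) :
    bJ (1/2) m (n+1) / bJ 0 m (n+1)
      = bJ (1/2) m n / bJ 0 m n - (m+1) / (n+1) * dd m n := by
  have k := bK_pos m n
  have e1 := bJ_add 0 m n
  have e2 := bJ_parts 0 m n
  have e3 := bJ_add (1/2) m n
  have e4 := bJ_parts (1/2) m n
  have hp : (1/2:ℝ)^(m+1) * (1-1/2)^(n+1) = (1/2)^(m+n+2) := by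
    norm_num; ring
  rw [hp] at e4
  have hk : bJ 0 m (n+1) = (n+1) * bJ 0 m n / (m+n+2) := by
    rw [eq_div_iff (by positivity)]; simp at e2; rw [e1]; linarith
  have hj : bJ (1/2) m (n+1) = ((n+1) * bJ (1/2) m n - (1/2)^(m+n+2)) / (m+n+2) := by
    rw [eq_div_iff (by positivity), e3]; linarith
  rw [hk, hj, dd]
  have : (m:ℝ)+n+2 ≠ 0 := by positivity
  have : (m:ℝ)+1 ≠ 0 := by positivity
  have : (n:ℝ)+1 ≠ 0 := by positivity
  field_simp

lemma half_le (m n : ℕ) (h : n ≤ m) : 1/2 ≤ bJ (1/2) m n / bJ 0 m n := by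
  induction m, h using Nat.le_induction with
  | base => rw [bJ_symm]
  | succ m _ ih => rw [step_left]; have := dd_pos m n; linarith

lemma hFn_of (x : ℝ) (h : 1/2 ≤ x) : hFn x = x := max_eq_left (by linarith)

lemma Rplus_eq_s13 (m n : ℕ) (h : n ≤ m) (x y : ℝ) (hx : x = m + 1) (hy : y = n + 1) :
    Rplus x y = dd m n := by
  unfold Rplus
  rw [I_eq_s13 m n x y hx hy, I_eq_s13 (m+1) n (x+1) y (by rw [hx]; push_cast; ring) hy,
    I_eq_s13 m (n+1) x (y+1) hx (by rw [hy]; push_cast; ring)]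
  have hd := dd_pos m n
  rw [hFn_of _ (half_le m n h), hFn_of _ (half_le (m+1) n (by omega)), step_left]
  rw [add_sub_cancel_left]
  apply max_eq_left
  rcases h.eq_or_lt with rfl | h
  · rw [step_right, bJ_symm, hFn, div_self (by positivity)]
    rw [sub_le_iff_le_add]
    apply max_le <;> linarith
  · rw [hFn_of _ (half_le m (n+1) h), step_right]
    have : 0 ≤ ((m:ℝ)+1)/(n+1) * dd m n := by positivity
    linarith

theorem Rplus_strict_anti_left (a b : ℕ) (ha : 0 < a) (hb : 0 < b) (hab : b ≤ a) :
    Rplus ((a : ℝ) + 1) b < Rplus a b := by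
  obtain ⟨m, rfl⟩ : ∃ m, a = m + 1 := ⟨a - 1, by omega⟩
  obtain ⟨n, rfl⟩ : ∃ n, b = n + 1 := ⟨b - 1, by omega⟩
  have h : n ≤ m := by omega
  rw [Rplus_eq_s13 m n h ((m + 1 : ℕ) : ℝ) _ (by push_cast; ring) (by push_cast; ring),
    Rplus_eq_s13 (m+1) n (by omega) _ _ (by push_cast; ring) (by push_cast; ring)]
  have k := bK_pos m n
  have e1 := bJ_add 0 m n
  have e2 := bJ_parts 0 m n
  have hk : bJ 0 (m+1) n = (m+1) * bJ 0 m n / (m+n+2) := by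
    rw [eq_div_iff (by positivity)]; simp at e2; rw [e1]; linarith
  have hr : dd (m+1) n = dd m n * ((m+n+2) / (2*(m+2))) := by
    unfold dd
    rw [hk, show m+1+n+2 = (m+n+2)+1 by ring, pow_succ]
    push_cast
    have : (m:ℝ)+n+2 ≠ 0 := by positivity
    have : (m:ℝ)+1 ≠ 0 := by positivity
    have : (m:ℝ)+1+1 ≠ 0 := by positivity
    have : (m:ℝ)+2 ≠ 0 := by positivity
    field_simp
    ring
  rw [hr]
  apply mul_lt_of_lt_one_right (dd_pos m n)
  rw [div_lt_one (by positivity)]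
  have : (n:ℝ) ≤ m := by exact_mod_cast h
  linarith
end

section
/- R⁺(a,b) tends to 0 as a+b tends to infinity over positive integers: for every ε > 0 there exists N such that for all positive integers a and b with a + b ≥ N, R⁺(a,b) < ε. -/
theorem cb_bound (m : ℕ) : m.centralBinom ^ 2 * (2 * m + 1) ≤ 16 ^ m := by
  induction m with
  | zero => simp
  | succ m ih =>
    have h := Nat.succ_mul_centralBinom_succ m
    have h2 : (m + 1) ^ 2 * ((m+1).centralBinom ^ 2 * (2 * (m+1) + 1)) ≤ (m + 1) ^ 2 * 16 ^ (m+1) := by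
      calc (m + 1) ^ 2 * ((m+1).centralBinom ^ 2 * (2 * (m+1) + 1))
          = ((m + 1) * (m+1).centralBinom) ^ 2 * (2 * m + 3) := by ring
        _ = (m.centralBinom ^ 2 * (2 * m + 1)) * (4 * ((2 * m + 1) * (2 * m + 3))) := by
            rw [h]; ring
        _ ≤ 16 ^ m * (4 * (4 * (m + 1) ^ 2)) := by
            exact Nat.mul_le_mul ih (Nat.mul_le_mul_left 4 (by nlinarith))
        _ = _ := by ring
    exact Nat.le_of_mul_le_mul_left h2 (by positivity)

theorem choose_bound (n k : ℕ) : (n.choose k) ^ 2 * n ≤ 4 ^ n := by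
  obtain ⟨m, rfl | rfl⟩ := Nat.even_or_odd' n
  · have h := Nat.choose_le_centralBinom k m
    calc _ ≤ m.centralBinom ^ 2 * (2 * m + 1) := by gcongr; omega
      _ ≤ 16 ^ m := cb_bound m
      _ = _ := by rw [pow_mul]; norm_num
  · have h : (2 * m + 1).choose k ≤ 2 * m.centralBinom := by
      cases k with
      | zero => have := Nat.centralBinom_pos m; simp; omega
      | succ k =>
        rw [Nat.choose_succ_succ]
        have h1 := Nat.choose_le_centralBinom k m
        have h2 := Nat.choose_le_centralBinom (k+1) m
        simp only [Nat.succ_eq_add_one]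
        omega
    calc _ ≤ (2 * m.centralBinom) ^ 2 * (2 * m + 1) := by gcongr
      _ = 4 * (m.centralBinom ^ 2 * (2 * m + 1)) := by ring
      _ ≤ 4 * 16 ^ m := by gcongr; exact cb_bound m
      _ = _ := by rw [pow_succ, pow_mul]; norm_num; ring

noncomputable def KK (c : ℝ) (p q : ℕ) : ℝ := ∫ t in c..1, t ^ p * (1 - t) ^ q

theorem KK_split (c : ℝ) (p q : ℕ) : KK c p q = KK c (p+1) q + KK c p (q+1) := by
  unfold KK
  rw [← intervalIntegral.integral_add]
  · congr 1; ext t; ring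
  · exact Continuous.intervalIntegrable (by fun_prop) _ _
  · exact Continuous.intervalIntegrable (by fun_prop) _ _

theorem KK_parts (c : ℝ) (p q : ℕ) :
    (p+1) * KK c p (q+1) - (q+1) * KK c (p+1) q = - (c ^ (p+1) * (1 - c) ^ (q+1)) := by
  have h : ∫ t in c..1, ((p+1:ℝ) * (t ^ p * (1 - t) ^ (q+1)) - (q+1) * (t ^ (p+1) * (1 - t) ^ q))
      = (1:ℝ) ^ (p+1) * (1 - 1) ^ (q+1) - c ^ (p+1) * (1 - c) ^ (q+1) := by
    apply intervalIntegral.integral_eq_sub_of_hasDerivAt (f := fun t : ℝ => t ^ (p+1) * (1 - t) ^ (q+1))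
    · intro t _
      have h1 := (hasDerivAt_id t).pow (p+1)
      have h2 := ((hasDerivAt_id t).const_sub 1).pow (q+1)
      have h3 := h1.mul h2
      refine h3.congr_deriv ?_
      simp
      ring
    · exact Continuous.intervalIntegrable (by fun_prop) _ _
  rw [intervalIntegral.integral_sub, intervalIntegral.integral_const_mul,
    intervalIntegral.integral_const_mul] at h
  · unfold KK
    rw [h]; simp
  · exact Continuous.intervalIntegrable (by fun_prop) _ _
  · exact Continuous.intervalIntegrable (by fun_prop) _ _

theorem KK_zero (q : ℕ) : ∀ p : ℕ, KK 0 p q * (p+q+1).factorial = p.factorial * q.factorial := by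
  induction q with
  | zero =>
    intro p
    simp [KK, Nat.factorial_succ]
    field_simp
  | succ q ih =>
    intro p
    have h := KK_parts 0 p q
    have h2 := ih (p+1)
    have e : p + (q+1) + 1 = p + 1 + q + 1 := by ring
    rw [e]
    have hp : (p:ℝ) + 1 ≠ 0 := by positivity
    apply mul_left_cancel₀ hp
    have h' : (p+1:ℝ) * KK 0 p (q+1) = (q+1) * KK 0 (p+1) q := by
      simp at h; linarith
    rw [← mul_assoc, h', mul_assoc, h2, Nat.factorial_succ, Nat.factorial_succ]
    push_cast; ring

theorem KK_pos (p q : ℕ) : 0 < KK 0 p q := by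
  have h := KK_zero q p
  have h1 : (0:ℝ) < (p+q+1).factorial := by positivity
  have h2 : (0:ℝ) < p.factorial * q.factorial := by positivity
  rw [← h] at h2
  exact pos_of_mul_pos_left h2 h1.le

noncomputable def II (p q : ℕ) : ℝ := KK (1/2) p q / KK 0 p q

theorem I_eq_s15 (p q : ℕ) (a b : ℝ) (ha : a = p + 1) (hb : b = q + 1) : I a b = II p q := by
  subst ha hb
  simp only [I, betaFn, II, KK, add_sub_cancel_right, Real.rpow_natCast]
  rw [one_div, inv_mul_eq_div]

theorem II_left (p q : ℕ) :
    II (p+1) q - II p q = (p+q+1).choose (p+1) / 2 ^ (p+q+2) := by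
  have h1 := KK_parts (1/2) p q
  have h2 := KK_split (1/2) p q
  have h3 := KK_parts 0 p q
  have h4 := KK_split 0 p q
  have h5 := KK_zero q p
  have k1 := KK_pos p q
  have k2 := KK_pos (p+1) q
  have hc := Nat.choose_mul_factorial_mul_factorial (show p + 1 ≤ p + q + 1 by omega)
  have hc' : ((p+q+1).choose (p+1) : ℝ) * ((p+1) * p.factorial) * q.factorial = (p+q+1).factorial := by
    rw [show p + q + 1 - (p + 1) = q by omega, Nat.factorial_succ p] at hc
    exact_mod_cast hc
  have hC : ((p+q+1).choose (p+1) : ℝ) * (p+1) * KK 0 p q = 1 := by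
    have hf : ((p+q+1).factorial : ℝ) ≠ 0 := by positivity
    apply mul_right_cancel₀ hf
    rw [mul_assoc, h5, one_mul, ← hc']; ring
  have e : (1/2:ℝ) ^ (p+1) * (1 - 1/2) ^ (q+1) = 1 / 2 ^ (p+q+2) := by
    rw [show (1:ℝ) - 1/2 = 1/2 by norm_num, ← pow_add, one_div_pow]; congr 2; ring
  rw [e] at h1
  have h3' : (p+1:ℝ) * KK 0 p q = (p+q+2) * KK 0 (p+1) q := by
    simp at h3; rw [h4]; linarith
  have h1' : (p+q+2) * KK (1/2) (p+1) q = (p+1) * KK (1/2) p q + 1 / 2 ^ (p+q+2) := by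
    rw [h2]; linarith
  have hs : (0:ℝ) < p + q + 2 := by positivity
  have hp : (0:ℝ) < p + 1 := by positivity
  have e1 : II (p+1) q = ((p+1) * KK (1/2) p q + 1 / 2 ^ (p+q+2)) / ((p+1) * KK 0 p q) := by
    rw [h3', ← h1', II, mul_div_mul_left _ _ hs.ne']
  have e2 : ((p+q+1).choose (p+1) : ℝ) = 1 / ((p+1) * KK 0 p q) := by
    rw [eq_div_iff (by positivity)]; linarith
  rw [e1, e2, II]
  field_simp
  ring

theorem KK_symm_half (p q : ℕ) : KK (1/2) p q + KK (1/2) q p = KK 0 p q := by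
  have h : KK (1/2) q p = ∫ t in (0:ℝ)..(1/2), t ^ p * (1 - t) ^ q := by
    have := intervalIntegral.integral_comp_sub_left (a := 0) (b := 1/2)
      (fun t : ℝ => t ^ q * (1 - t) ^ p) 1
    rw [KK]
    norm_num at this ⊢
    rw [← this]
    congr 1; ext t; ring
  rw [h, KK, KK, add_comm]
  apply intervalIntegral.integral_add_adjacent_intervals
  · exact Continuous.intervalIntegrable (by fun_prop) _ _
  · exact Continuous.intervalIntegrable (by fun_prop) _ _

theorem II_symm (p q : ℕ) : II p q = 1 - II q p := by
  have h1 := KK_symm_half p q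
  have h2 := KK_symm_half q p
  have e : KK 0 q p = KK 0 p q := by rw [← h1, ← h2, add_comm]
  have k := KK_pos p q
  rw [II, II, e, eq_sub_iff_add_eq, ← add_div, h1, div_self k.ne']

theorem hFn_lip (x y : ℝ) : hFn x - hFn y ≤ |x - y| := by
  unfold hFn
  have h1 := le_abs_self (x - y)
  have h2 := neg_abs_le (x - y)
  have h3 := le_max_left y (1 - y)
  have h4 := le_max_right y (1 - y)
  rw [sub_le_iff_le_add]
  apply max_le <;> linarith

theorem D_lt (ε : ℝ) (hε : 0 < ε) (n k : ℕ) (hn : 1 / ε ^ 2 ≤ n) :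
    (n.choose k : ℝ) / 2 ^ (n+1) < ε := by
  have hb : ((n.choose k : ℝ)) ^ 2 * n ≤ 4 ^ n := by exact_mod_cast choose_bound n k
  rw [div_le_iff₀ (by positivity)] at hn
  rw [div_lt_iff₀ (by positivity)]
  by_contra hcon
  push Not at hcon
  have h1 : (ε * 2 ^ (n+1)) ^ 2 * n ≤ (n.choose k : ℝ) ^ 2 * n := by gcongr
  have h2 : (ε * 2 ^ (n+1)) ^ 2 * n = (n * ε ^ 2) * (4 * 4 ^ n) := by
    rw [show (4:ℝ) ^ n = (2 ^ n) ^ 2 by rw [← pow_mul, mul_comm, pow_mul]; norm_num]; ring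
  have h3 : (0:ℝ) < 4 ^ n := by positivity
  nlinarith

theorem Rplus_tendsto_zero :
    ∀ ε : ℝ, 0 < ε → ∃ N : ℕ, ∀ a b : ℕ, 0 < a → 0 < b → N ≤ a + b →
      Rplus a b < ε := by
  intro ε hε
  obtain ⟨M, hM⟩ := exists_nat_ge (1 / ε ^ 2)
  refine ⟨M + 1, ?_⟩
  intro a b ha hb hab
  obtain ⟨p, rfl⟩ : ∃ p, a = p + 1 := ⟨a - 1, by omega⟩
  obtain ⟨q, rfl⟩ : ∃ q, b = q + 1 := ⟨b - 1, by omega⟩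
  have hn : 1 / ε ^ 2 ≤ ((p + q + 1 : ℕ) : ℝ) := hM.trans (by exact_mod_cast (by omega))
  unfold Rplus
  rw [I_eq_s15 p q ((p+1:ℕ):ℝ) ((q+1:ℕ):ℝ) (by push_cast; ring) (by push_cast; ring),
    I_eq_s15 (p+1) q _ _ (by push_cast; ring) (by push_cast; ring),
    I_eq_s15 p (q+1) _ _ (by push_cast; ring) (by push_cast; ring)]
  apply max_lt
  · refine (hFn_lip _ _).trans_lt ?_
    rw [II_left, abs_of_nonneg (by positivity)]
    exact D_lt ε hε (p+q+1) _ hn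
  · refine (hFn_lip _ _).trans_lt ?_
    rw [II_symm p (q+1), II_symm p q, abs_sub_comm,
      show 1 - II q p - (1 - II (q+1) p) = II (q+1) p - II q p by ring, II_left,
      abs_of_nonneg (by positivity), add_comm q p]
    exact D_lt ε hε (p+q+1) _ hn
end

section
/- For all positive integers a and b with a ≠ b, R⁻(a,b) = −(1/2)^{a+b} / (min(a,b) · B(a,b)), and for every positive integer a, R⁻(a,a) = (1/2)^{2a} / (a · B(a,a)). Consequently, for positive integers a, b, R⁻(a,b) > 0 if and only if a = b. -/
noncomputable def Jx (c : ℝ) (m n : ℕ) : ℝ := ∫ t in c..1, t ^ m * (1 - t) ^ n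

lemma J_int (c d : ℝ) (m n : ℕ) :
    IntervalIntegrable (fun t : ℝ => t ^ m * (1 - t) ^ n) MeasureTheory.volume c d :=
  Continuous.intervalIntegrable (by fun_prop) _ _

lemma J_split (c : ℝ) (m n : ℕ) : Jx c m n = Jx c (m+1) n + Jx c m (n+1) := by
  unfold Jx
  rw [← intervalIntegral.integral_add (J_int _ _ _ _) (J_int _ _ _ _)]
  congr 1; ext t; ring

lemma J_parts (c : ℝ) (m n : ℕ) :
    ((m:ℝ)+1) * Jx c m (n+1) - ((n:ℝ)+1) * Jx c (m+1) n = - (c^(m+1) * (1-c)^(n+1)) := by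
  unfold Jx
  rw [← intervalIntegral.integral_const_mul, ← intervalIntegral.integral_const_mul,
    ← intervalIntegral.integral_sub ((J_int _ _ _ _).const_mul _) ((J_int _ _ _ _).const_mul _)]
  rw [intervalIntegral.integral_eq_sub_of_hasDerivAt (f := fun t : ℝ => t^(m+1) * (1-t)^(n+1))]
  · simp
  · intro t _
    have h1 := hasDerivAt_pow (m+1) t
    have h2 := ((hasDerivAt_id t).const_sub 1).pow (n+1)
    refine (h1.mul h2).congr_deriv ?_
    simp
    ring
  · exact Continuous.intervalIntegrable (by fun_prop) _ _

lemma J_symm (m n : ℕ) : Jx (1/2) m n + Jx (1/2) n m = Jx 0 m n := by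
  have h : Jx (1/2) n m = ∫ t in (0:ℝ)..(1/2), t ^ m * (1 - t) ^ n := by
    have := intervalIntegral.integral_comp_sub_left (a := 1/2) (b := 1)
      (fun t : ℝ => t ^ m * (1 - t) ^ n) 1
    norm_num at this
    unfold Jx
    norm_num
    rw [← this]
    congr 1; ext t; ring
  rw [h, add_comm]
  unfold Jx
  exact intervalIntegral.integral_add_adjacent_intervals (J_int _ _ _ _) (J_int _ _ _ _)

lemma J_pos (m n : ℕ) : 0 < Jx 0 m n := by
  apply intervalIntegral.intervalIntegral_pos_of_pos_on (J_int _ _ _ _) _ (by norm_num)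
  intro t ht
  have := ht.1
  have : 0 < 1 - t := by linarith [ht.2]
  positivity

lemma beta_J (m n : ℕ) : betaFn ((m+1:ℕ):ℝ) ((n+1:ℕ):ℝ) = Jx 0 m n := by
  unfold betaFn Jx
  simp

lemma I_J (m n : ℕ) : I ((m+1:ℕ):ℝ) ((n+1:ℕ):ℝ) = Jx (1/2) m n / Jx 0 m n := by
  unfold I
  rw [beta_J, one_div_mul_eq_div]
  simp [Jx]

lemma beta_pos' (a b : ℕ) (ha : 0 < a) (hb : 0 < b) : 0 < betaFn a b := by
  obtain ⟨m, rfl⟩ := Nat.exists_eq_add_of_lt ha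
  obtain ⟨n, rfl⟩ := Nat.exists_eq_add_of_lt hb
  simp only [zero_add]
  rw [beta_J]; exact J_pos _ _

lemma beta_symm' (a b : ℕ) (ha : 0 < a) (hb : 0 < b) : betaFn a b = betaFn b a := by
  obtain ⟨m, rfl⟩ := Nat.exists_eq_add_of_lt ha
  obtain ⟨n, rfl⟩ := Nat.exists_eq_add_of_lt hb
  simp only [zero_add]
  rw [beta_J, beta_J, ← J_symm, ← J_symm, add_comm]

lemma I_symm (a b : ℕ) (ha : 0 < a) (hb : 0 < b) : I a b + I b a = 1 := by
  obtain ⟨m, rfl⟩ := Nat.exists_eq_add_of_lt ha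
  obtain ⟨n, rfl⟩ := Nat.exists_eq_add_of_lt hb
  simp only [zero_add]
  have h := J_pos m n
  have h2 : Jx 0 n m = Jx 0 m n := by rw [← J_symm, ← J_symm, add_comm]
  rw [I_J, I_J, h2, ← add_div, J_symm, div_self h.ne']

lemma I_step (a b : ℕ) (ha : 0 < a) (hb : 0 < b) :
    I (a+1) b = I a b + (1/2:ℝ)^(a+b) / (a * betaFn a b) := by
  obtain ⟨m, rfl⟩ := Nat.exists_eq_add_of_lt ha
  obtain ⟨n, rfl⟩ := Nat.exists_eq_add_of_lt hb
  simp only [zero_add]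
  have e : ((m+1:ℕ):ℝ) + 1 = ((m+1+1:ℕ):ℝ) := by push_cast; ring
  rw [e, I_J, I_J, beta_J]
  have p1 := J_pos m n
  have p2 := J_pos (m+1) n
  have q0 := J_parts 0 m n
  have q1 := J_parts (1/2) m n
  have s0 := J_split 0 m n
  have s1 := J_split (1/2) m n
  have e2 : (1/2:ℝ)^(m+1) * (1-1/2)^(n+1) = (1/2:ℝ)^(m+1+(n+1)) := by
    rw [pow_add _ (m+1) (n+1)]; norm_num
  rw [e2] at q1
  simp at q0
  have r0 : ((m:ℝ)+n+2) * Jx 0 (m+1) n = (m+1) * Jx 0 m n := by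
    rw [s0]; linear_combination -q0
  have r1 : ((m:ℝ)+n+2) * Jx (1/2) (m+1) n
      = (m+1) * Jx (1/2) m n + (1/2:ℝ)^(m+1+(n+1)) := by
    rw [s1]; linear_combination -q1
  have hm : (0:ℝ) < m + 1 := by positivity
  have hmn : (0:ℝ) < m + n + 2 := by positivity
  rw [← mul_div_mul_left _ _ hmn.ne', r0, r1]
  push_cast
  field_simp

lemma I_step' (a b : ℕ) (ha : 0 < a) (hb : 0 < b) :
    I a (b+1) = I a b - (1/2:ℝ)^(a+b) / (b * betaFn a b) := by
  have h := I_step b a hb ha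
  have h1 := I_symm a b ha hb
  have h2 := I_symm a (b+1) ha (by omega)
  push_cast at h2
  rw [beta_symm' b a hb ha, add_comm b a] at h
  linarith

lemma d_pos (a b : ℕ) (ha : 0 < a) (hb : 0 < b) (c : ℕ) (hc : 0 < c) :
    0 < (1/2:ℝ)^(a+b) / (c * betaFn a b) := by
  have := beta_pos' a b ha hb
  positivity

lemma I_ge_s16 (b k : ℕ) (hb : 0 < b) : 1/2 ≤ I ((b+k:ℕ):ℝ) b := by
  induction k with
  | zero => have := I_symm b b hb hb; simp; linarith
  | succ k ih =>
    have := I_step (b+k) b (by omega) hb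
    have h2 := d_pos (b+k) b (by omega) hb (b+k) (by omega)
    rw [← add_assoc, Nat.cast_succ (b+k), this]
    linarith

lemma h_symm (x : ℝ) : hFn (1 - x) = hFn x := by
  unfold hFn; rw [max_comm]; congr 1; ring

lemma R_symm (a b : ℕ) (ha : 0 < a) (hb : 0 < b) : Rminus a b = Rminus b a := by
  have h1 := I_symm a b ha hb
  have h2 := I_symm a (b+1) ha (by omega)
  have h3 := I_symm (a+1) b (by omega) hb
  push_cast at h2 h3
  unfold Rminus
  rw [show I a b = 1 - I b a by linarith, show I a (b+1) = 1 - I (b+1) a by linarith,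
    show I (a+1) b = 1 - I b (a+1) by linarith, h_symm, h_symm, h_symm, min_comm]

lemma R_gt (a b : ℕ) (hb : 0 < b) (hab : b < a) :
    Rminus a b = -((1 / 2 : ℝ) ^ (a + b) / (b * betaFn a b)) := by
  have ha : 0 < a := by omega
  have s1 := I_step a b ha hb
  have s2 := I_step' a b ha hb
  have d1 := d_pos a b ha hb a ha
  have d2 := d_pos a b ha hb b hb
  have g := I_ge_s16 (b+1) (a-(b+1)) (by omega)
  rw [show b+1+(a-(b+1)) = a by omega] at g
  push_cast at g
  unfold Rminus
  rw [h_ge g, h_ge (x := I a b) (by linarith), h_ge (x := I (a+1) b) (by linarith), s1, s2,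
    min_eq_right (by linarith)]
  ring

lemma R_self (a : ℕ) (ha : 0 < a) :
    Rminus a a = (1 / 2 : ℝ) ^ (2 * a) / (a * betaFn a a) := by
  have s1 := I_step a a ha ha
  have d1 := d_pos a a ha ha a ha
  have h1 := I_symm a a ha ha
  have h2 := I_symm a (a+1) ha (by omega)
  push_cast at h2
  unfold Rminus
  rw [show I a (a+1) = 1 - I (a+1) a by linarith, h_symm, min_self,
    h_ge (x := I a a) (by linarith), h_ge (x := I (a+1) a) (by linarith), s1, two_mul]
  ring

lemma R_ne (a b : ℕ) (ha : 0 < a) (hb : 0 < b) (hab : a ≠ b) :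
    Rminus a b = -((1 / 2 : ℝ) ^ (a + b) / (min (a : ℝ) (b : ℝ) * betaFn a b)) := by
  rcases lt_or_gt_of_ne hab with h | h
  · rw [R_symm a b ha hb, R_gt b a ha h, min_eq_left (by exact_mod_cast h.le),
      beta_symm' b a hb ha, add_comm b a]
  · rw [R_gt a b hb h, min_eq_right (by exact_mod_cast h.le)]

theorem Rminus_eq :
    (∀ a b : ℕ, 0 < a → 0 < b → a ≠ b →
      Rminus a b = -((1 / 2 : ℝ) ^ (a + b) / (min (a : ℝ) (b : ℝ) * betaFn a b))) ∧
    (∀ a : ℕ, 0 < a → Rminus a a = (1 / 2 : ℝ) ^ (2 * a) / (a * betaFn a a)) ∧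
    (∀ a b : ℕ, 0 < a → 0 < b → (0 < Rminus a b ↔ a = b)) := by
  refine ⟨R_ne, R_self, fun a b ha hb => ⟨fun h => ?_, ?_⟩⟩
  · by_contra hab
    rw [R_ne a b ha hb hab] at h
    have := beta_pos' a b ha hb
    have : (0:ℝ) < min (a:ℝ) b := lt_min (by exact_mod_cast ha) (by exact_mod_cast hb)
    have : 0 < (1 / 2 : ℝ) ^ (a + b) / (min (a : ℝ) (b : ℝ) * betaFn a b) := by positivity
    linarith
  · rintro rfl
    rw [R_self a ha, two_mul]
    exact d_pos a a ha ha a ha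
end
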